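/- For every real number c > 1 and every nonempty compact metrizable finite dimensional (covering dimension) space K, there is a c-good map of C_p(I) onto C_p(K), where I = [0,1]. -/

import Mathlib

open Set Function

noncomputable section

/-- Topology of pointwise convergence on `C(X, ℝ)`. -/
def ptTop (X : Type*) [TopologicalSpace X] : TopologicalSpace C(X, ℝ) :=
  TopologicalSpace.induced (fun f => (f : X → ℝ)) Pi.topologicalSpace

/-- `X` ℓ-dominates `Y`: a continuous linear map of `C_p(X)` onto `C_p(Y)`. -/
def LDominates (X Y : Type*) [TopologicalSpace X] [TopologicalSpace Y] : Prop :=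
  ∃ L : C(X, ℝ) →ₗ[ℝ] C(Y, ℝ), @Continuous _ _ (ptTop X) (ptTop Y) L ∧ Surjective L

/-- Covering dimension at most `n`. -/
def CovDimLE (X : Type*) [TopologicalSpace X] (n : ℕ) : Prop :=
  ∀ (ι : Type) (U : ι → Set X), Finite ι → (∀ i, IsOpen (U i)) → (⋃ i, U i) = univ →
    ∃ V : ι → Set X, (∀ i, IsOpen (V i)) ∧ (∀ i, V i ⊆ U i) ∧ (⋃ i, V i) = univ ∧
      ∀ x : X, {i | x ∈ V i}.ncard ≤ n + 1

/-- Finite (covering) dimensional space. -/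
def FinDimSpace (X : Type*) [TopologicalSpace X] : Prop := ∃ n : ℕ, CovDimLE X n

/-- Strongly countable dimensional space. -/
def StronglyCountableDim (X : Type*) [TopologicalSpace X] : Prop :=
  ∃ F : ℕ → Set X, (∀ n, IsClosed (F n)) ∧ (∀ n, FinDimSpace ↥(F n)) ∧ (⋃ n, F n) = univ

/-- `I(S)` relative to a subset: points of `S` with a relatively open
finite dimensional neighbourhood in `S`. -/
def fdI (X : Type*) [TopologicalSpace X] (S : Set X) : Set X :=
  {x | x ∈ S ∧ ∃ U : Set X, IsOpen U ∧ x ∈ U ∧ FinDimSpace ↥(U ∩ S)}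

/-- The transfinite derived sets `K^[α]`. -/
def fdDerived (X : Type*) [TopologicalSpace X] : Ordinal → Set X := fun o =>
  Ordinal.limitRecOn o (univ : Set X)
    (fun _ S => S \ fdI X S)
    (fun o _ ih => ⋂ (o' : Ordinal) (h : o' < o), ih o' h)

/-- A k_ω sequence for `X`. -/
def IsKOmegaSeq (X : Type*) [TopologicalSpace X] (K : ℕ → Set X) : Prop :=
  (∀ n, IsCompact (K n)) ∧ (∀ n, K n ⊆ K (n + 1)) ∧
  (∀ C : Set X, IsCompact C → ∃ n, C ⊆ K n) ∧
  (∀ A : Set X, (∀ n, ∃ F : Set X, IsClosed F ∧ A ∩ K n = F ∩ K n) → IsClosed A)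

def KOmegaSpace (X : Type*) [TopologicalSpace X] : Prop := ∃ K : ℕ → Set X, IsKOmegaSeq X K

/-- Submetrizable: there is a coarser metrizable topology. -/
def Submetrizable (X : Type*) [TopologicalSpace X] : Prop :=
  ∃ t' : TopologicalSpace X, (∀ s : Set X, @IsOpen X t' s → IsOpen s) ∧
    @TopologicalSpace.MetrizableSpace X t'

def Hemicompact (X : Type*) [TopologicalSpace X] : Prop :=
  ∃ K : ℕ → Set X, (∀ n, IsCompact (K n)) ∧ ∀ C : Set X, IsCompact C → ∃ n, C ⊆ K n

/-- `B` is (functionally) bounded in `X`. -/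
def CBounded (X : Type*) [TopologicalSpace X] (B : Set X) : Prop :=
  ∀ f : C(X, ℝ), ∃ M : ℝ, ∀ x ∈ B, |f x| ≤ M

/-- μ-space: closed bounded subsets are compact. -/
def MuSpace (X : Type*) [TopologicalSpace X] : Prop :=
  ∀ B : Set X, IsClosed B → CBounded X B → IsCompact B

/-- `C(K; A)`: continuous functions vanishing on `A`, as a submodule. -/
def Czero (K : Type*) [TopologicalSpace K] (A : Set K) : Submodule ℝ C(K, ℝ) where
  carrier := {f | ∀ x ∈ A, f x = 0}
  add_mem' := by intro f g hf hg x hx; simp [hf x hx, hg x hx]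
  zero_mem' := by intro x hx; simp
  smul_mem' := by intro c f hf x hx; simp [hf x hx]

/-- Pointwise topology on `C(K;A)`. -/
def ptTopSub {K : Type*} [TopologicalSpace K] (A : Set K) :
    TopologicalSpace (Czero K A) :=
  TopologicalSpace.induced (fun f => (f : C(K, ℝ))) (ptTop K)

/-- `c`-good map between relative function spaces. -/
def IsCGood {K₁ K₂ : Type*} [TopologicalSpace K₁] [CompactSpace K₁]
    [TopologicalSpace K₂] [CompactSpace K₂] (A₁ : Set K₁) (A₂ : Set K₂) (c : ℝ)
    (L : Czero K₁ A₁ →ₗ[ℝ] Czero K₂ A₂) : Prop :=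
  @Continuous _ _ (ptTopSub A₁) (ptTopSub A₂) L ∧
  (∀ g : Czero K₁ A₁, ‖(L g : C(K₂, ℝ))‖ ≤ ‖(g : C(K₁, ℝ))‖) ∧
  (∀ f : Czero K₂ A₂, ∃ g : Czero K₁ A₁, L g = f ∧
    ‖(g : C(K₁, ℝ))‖ ≤ c * ‖(f : C(K₂, ℝ))‖)

/-- `c`-good map between full function spaces. -/
def IsCGoodMap {K₁ K₂ : Type*} [TopologicalSpace K₁] [CompactSpace K₁]
    [TopologicalSpace K₂] [CompactSpace K₂] (c : ℝ)
    (L : C(K₁, ℝ) →ₗ[ℝ] C(K₂, ℝ)) : Prop :=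
  @Continuous _ _ (ptTop K₁) (ptTop K₂) L ∧
  (∀ g : C(K₁, ℝ), ‖L g‖ ≤ ‖g‖) ∧
  (∀ f : C(K₂, ℝ), ∃ g : C(K₁, ℝ), L g = f ∧ ‖g‖ ≤ c * ‖f‖)


/-!
Fix `m` maps `θ j : K → I` and average: `L g = m⁻¹ ∑ j, g ∘ θ j` is pointwise continuous of norm at
most one. If `dim K ≤ n`, Ostrand's theorem gives, at every scale, `m` finite disjoint families of
small closed cells such that each point of `K` is missed by at most `n + 1` of the families; here
the `j`-th family consists of the sets on which the functions of a bump covering avoid the `j`-th of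
`m` disjoint gaps in `(0, 1)`. By Baire's theorem, for generic `θ` there are such families at every
scale whose cells have pairwise disjoint images, over all `m` families together. For `f` on `K`,
Tietze's theorem gives `g` of norm at most `‖f‖` which on the image of each cell is a constant close
to `f` on that cell, so all but `n + 1` of the `m` terms of `L g x` are close to `f x`. Hence
`‖f - L g‖ ≤ q ‖f‖`, where `q` is as close as we like to `2 (n + 1) / m`, and iterating solves
`L g = f` with `‖g‖ ≤ (1 - q)⁻¹ ‖f‖`.
-/

section Gluing

variable {X τ : Type*} [TopologicalSpace X]

lemma exists_continuousOn_iUnion_eqOn {Y : Type*} [TopologicalSpace Y] [Nonempty Y]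
    {D : τ → Set X} (hfin : LocallyFinite D) (hclosed : ∀ s, IsClosed (D s))
    (hdisj : Pairwise (Disjoint on D)) {f : τ → X → Y} (hf : ∀ s, ContinuousOn (f s) (D s)) :
    ∃ F : X → Y, ContinuousOn F (⋃ s, D s) ∧ ∀ s, EqOn F (f s) (D s) := by
  classical
  let F : X → Y := fun x ↦ if h : ∃ s, x ∈ D s then f h.choose x else Classical.arbitrary Y
  have hF : ∀ s, EqOn F (f s) (D s) := by
    intro s x hx
    have hex : ∃ t, x ∈ D t := ⟨s, hx⟩
    have hchoose : hex.choose = s := hdisj.eq (not_disjoint_iff.2 ⟨x, hex.choose_spec, hx⟩)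
    simp only [F, dif_pos hex, hchoose]
  exact ⟨F, hfin.continuousOn_iUnion hclosed fun s ↦ (hf s).congr (hF s), hF⟩

lemma exists_continuousMap_eqOn_of_pairwise_disjoint [NormalSpace X]
    {D : τ → Set X} (hfin : LocallyFinite D) (hclosed : ∀ s, IsClosed (D s))
    (hdisj : Pairwise (Disjoint on D)) {f : τ → X → ℝ} (hf : ∀ s, ContinuousOn (f s) (D s))
    {J : Set ℝ} [OrdConnected J] (hJ : J.Nonempty) (hfJ : ∀ s, MapsTo (f s) (D s) J) :
    ∃ g : C(X, ℝ), (∀ x, g x ∈ J) ∧ ∀ s, EqOn g (f s) (D s) := by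
  obtain ⟨F, hFcont, hF⟩ := exists_continuousOn_iUnion_eqOn hfin hclosed hdisj hf
  have hFJ : ∀ x : ⋃ s, D s, F x ∈ J := by
    rintro ⟨x, hx⟩
    obtain ⟨s, hs⟩ := mem_iUnion.1 hx
    exact (hF s hs).symm ▸ hfJ s hs
  obtain ⟨g, hgJ, hgF⟩ := ContinuousMap.exists_restrict_eq_forall_mem_of_closed
    ⟨_, continuousOn_iff_continuous_domRestrict.1 hFcont⟩ hFJ hJ
    (hfin.isClosed_iUnion hclosed)
  refine ⟨g, hgJ, fun s x hx ↦ ?_⟩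
  have hgx : g x = F x := DFunLike.congr_fun hgF ⟨x, mem_iUnion_of_mem s hx⟩
  exact hgx.trans (hF s hx)

end Gluing

section LevelCell

variable {X κ α : Type*} [LinearOrder α]

/-- The set of points at which every value `p i x` avoids the gap `(a, b)`, lying above it for
`i ∈ S` and below it for `i ∉ S`. For varying `S` and fixed gap these sets are disjoint. -/
def levelCell (p : κ → X → α) (a b : α) (S : Set κ) : Set X :=
  {x | (∀ i ∈ S, b ≤ p i x) ∧ ∀ i ∉ S, p i x ≤ a}

lemma isClosed_levelCell [TopologicalSpace X] [TopologicalSpace α] [OrderClosedTopology α]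
    {p : κ → X → α} (hp : ∀ i, Continuous (p i)) (a b : α) (S : Set κ) :
    IsClosed (levelCell p a b S) :=
  have hupper : IsClosed {x | ∀ i ∈ S, b ≤ p i x} := by
    simp only [ofPred_forall]
    exact isClosed_biInter fun i _ ↦ isClosed_le continuous_const (hp i)
  have hlower : IsClosed {x | ∀ i ∉ S, p i x ≤ a} := by
    simp only [ofPred_forall]
    exact isClosed_biInter fun i _ ↦ isClosed_le (hp i) continuous_const
  hupper.inter hlower

lemma pairwise_disjoint_levelCell (p : κ → X → α) {a b : α} (hab : a < b) :
    Pairwise (Disjoint on levelCell p a b) := by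
  refine fun S T hST ↦ disjoint_left.2 fun x hxS hxT ↦ hST ?_
  ext i
  refine ⟨fun hiS ↦ ?_, fun hiT ↦ ?_⟩
  · by_contra hiT
    exact (hab.trans_le (hxS.1 i hiS)).not_ge (hxT.2 i hiT)
  · by_contra hiS
    exact (hab.trans_le (hxT.1 i hiT)).not_ge (hxS.2 i hiS)

lemma exists_mem_Ioo_of_notMem_levelCell {p : κ → X → α} {a b : α} {x : X}
    (hx : ∀ S, x ∉ levelCell p a b S) : ∃ i, p i x ∈ Ioo a b := by
  by_contra! hgap
  exact hx {i | a < p i x}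
    ⟨fun i hi ↦ not_lt.1 fun hib ↦ hgap i ⟨hi, hib⟩, fun i hi ↦ not_lt.1 hi⟩

lemma encard_notMem_levelCell_le {ι : Type*} {t : ℕ → α} (ht : Monotone t) {e : ι → ℕ}
    (he : Injective e) (p : κ → X → α) (x : X) :
    {j | ∀ S, x ∉ levelCell p (t (e j)) (t (e j + 1)) S}.encard ≤ {i | t 0 < p i x}.encard := by
  have hgap : ∀ j ∈ {j | ∀ S, x ∉ levelCell p (t (e j)) (t (e j + 1)) S},
      ∃ i, p i x ∈ Ioo (t (e j)) (t (e j + 1)) :=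
    fun j hj ↦ exists_mem_Ioo_of_notMem_levelCell hj
  rcases isEmpty_or_nonempty κ with hκ | hκ
  · have hempty : {j | ∀ S, x ∉ levelCell p (t (e j)) (t (e j + 1)) S} = ∅ :=
      eq_empty_of_forall_notMem fun j hj ↦ hκ.elim (hgap j hj).choose
    simp only [hempty, encard_empty, zero_le]
  choose! i hi using hgap
  -- The gaps are disjoint, so distinct missed indices `j` have distinct `i j`.
  refine encard_le_encard_of_injOn (f := i) (fun j hj ↦ (ht (Nat.zero_le _)).trans_lt (hi j hj).1)
    fun j hj k hk hjk ↦ he ?_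
  have hjk_lt : e j < e k + 1 := ht.reflect_lt ((hi j hj).1.trans (hjk ▸ (hi k hk).2))
  have hkj_lt : e k < e j + 1 := ht.reflect_lt ((hi k hk).1.trans (hjk ▸ (hi j hj).2))
  lia

end LevelCell

section Ostrand

variable {K ι : Type*} [PseudoMetricSpace K]

/-- Families as in Ostrand's covering theorem: for each `j : ι` the sets `B j s` are closed,
pairwise disjoint and of small diameter, and every point is missed by at most `k` of the families
`B j`. -/
structure IsOstrandFamily {σ : Type*} (k : ℕ) (ε : ℝ) (B : ι → σ → Set K) : Prop where
  isClosed : ∀ j s, IsClosed (B j s)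
  disjoint : ∀ j, Pairwise (Disjoint on B j)
  dist_lt : ∀ j s, ∀ x ∈ B j s, ∀ y ∈ B j s, dist x y < ε
  encard_missed_le : ∀ x, {j | ∀ s, x ∉ B j s}.encard ≤ k

lemma IsOstrandFamily.mono {σ : Type*} {k : ℕ} {ε ε' : ℝ} {B : ι → σ → Set K}
    (hB : IsOstrandFamily k ε B) (hε : ε ≤ ε') : IsOstrandFamily k ε' B where
  __ := hB
  dist_lt j s x hx y hy := (hB.dist_lt j s x hx y hy).trans_le hε

lemma CovDimLE.exists_cover_dist_lt [CompactSpace K] {n : ℕ} (hK : CovDimLE K n) {ε : ℝ}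
    (hε : 0 < ε) :
    ∃ (N : ℕ) (V : Fin N → Set K), (∀ i, IsOpen (V i)) ∧ (⋃ i, V i) = univ ∧
      (∀ i, ∀ x ∈ V i, ∀ y ∈ V i, dist x y < ε) ∧ ∀ x, {i | x ∈ V i}.encard ≤ (n + 1 : ℕ) := by
  obtain ⟨F, -, hFfin, hF⟩ := finite_cover_balls_of_compact (isCompact_univ (X := K)) (half_pos hε)
  have := hFfin.to_subtype
  obtain ⟨N, ⟨e⟩⟩ := Finite.exists_equiv_fin F
  have hcover : (⋃ i, Metric.ball (e.symm i : K) (ε / 2)) = univ := by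
    rw [e.symm.surjective.iUnion_comp fun z : F ↦ Metric.ball (z : K) (ε / 2), iUnion_coe_set]
    exact univ_subset_iff.1 hF
  obtain ⟨V, hVopen, hVball, hVcover, hVcard⟩ :=
    hK (Fin N) _ inferInstance (fun _ ↦ Metric.isOpen_ball) hcover
  refine ⟨N, V, hVopen, hVcover, fun i x hx y hy ↦ ?_, fun x ↦ ?_⟩
  · calc
      dist x y ≤ dist x (e.symm i) + dist y (e.symm i) := dist_triangle_right _ _ _
      _ < ε / 2 + ε / 2 := add_lt_add (hVball i hx) (hVball i hy)
      _ = ε := add_halves ε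
  · rw [← (toFinite _).cast_ncard_eq]
    exact_mod_cast hVcard x

lemma CovDimLE.exists_isOstrandFamily [CompactSpace K] {n : ℕ} (hK : CovDimLE K n) (ι : Type*)
    [Countable ι] {ε : ℝ} (hε : 0 < ε) :
    ∃ (σ : Type) (_ : Finite σ) (B : ι → σ → Set K), IsOstrandFamily (n + 1) ε B := by
  obtain ⟨N, V, hVopen, hVcover, hVdist, hVcard⟩ := hK.exists_cover_dist_lt hε
  obtain ⟨p, hpV⟩ := BumpCovering.exists_isSubordinate_of_locallyFinite isClosed_univ V hVopen
    (locallyFinite_of_finite V) hVcover.ge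
  have hp_pos : ∀ {i x}, 0 < p i x → x ∈ V i := fun hx ↦ hpV _ (subset_tsupport _ hx.ne')
  obtain ⟨t, ht, ht01, -⟩ := exists_seq_strictMono_tendsto' (zero_lt_one (α := ℝ))
  obtain ⟨e, he⟩ := exists_injective_nat ι
  refine ⟨Set (Fin N), inferInstance, fun j ↦ levelCell (p ·) (t (e j)) (t (e j + 1)),
    fun j ↦ isClosed_levelCell (fun i ↦ (p i).continuous) _ _,
    fun j ↦ pairwise_disjoint_levelCell _ (ht (Nat.lt_succ_self _)), ?_, fun x ↦ ?_⟩
  · rintro j S x ⟨hxS, hxS'⟩ y ⟨hyS, -⟩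
    let i := p.ind x (mem_univ x)
    have hxi : p i x = 1 := p.ind_apply x (mem_univ x)
    have hiS : i ∈ S := by
      by_contra hiS
      exact ((hxS' i hiS).trans_lt (ht01 _).2).ne hxi
    exact hVdist i x (hp_pos ((ht01 _).1.trans_le (hxS i hiS)))
      y (hp_pos ((ht01 _).1.trans_le (hyS i hiS)))
  · calc
      _ ≤ {i | t 0 < p i x}.encard := encard_notMem_levelCell_le ht.monotone he _ x
      _ ≤ {i | x ∈ V i}.encard := encard_le_encard fun i hi ↦ hp_pos ((ht01 0).1.trans hi)
      _ ≤ _ := hVcard x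

end Ostrand

section GeneralPosition

variable {K ι : Type*}

lemma isOpen_setOfPred_disjoint_image {X Y : Type*} [TopologicalSpace X] [TopologicalSpace Y]
    [T2Space Y] {A B : Set X} (hA : IsCompact A) (hB : IsCompact B) :
    IsOpen {f : C(X, Y) × C(X, Y) | Disjoint (f.1 '' A) (f.2 '' B)} := by
  refine isOpen_iff_mem_nhds.2 fun ⟨f, g⟩ hfg ↦ ?_
  obtain ⟨U, V, hU, hV, hfU, hgV, hUV⟩ := SeparatedNhds.of_isCompact_isCompact
    (hA.image f.continuous) (hB.image g.continuous) hfg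
  filter_upwards [prod_mem_nhds
    (ContinuousMap.eventually_mapsTo hA hU (mapsTo_iff_image_subset.2 hfU))
    (ContinuousMap.eventually_mapsTo hB hV (mapsTo_iff_image_subset.2 hgV))] with f' hf'
  exact hUV.mono hf'.1.image_subset hf'.2.image_subset

lemma dense_setOfPred_injective (τ : Type*) [Finite τ] : Dense {c : τ → ℝ | Injective c} := by
  let diff (q : τ × τ) : (τ → ℝ) →ₗ[ℝ] ℝ :=
    (LinearMap.proj q.1 : (τ → ℝ) →ₗ[ℝ] ℝ) - LinearMap.proj q.2
  have hset : {c : τ → ℝ | Injective c} =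
      ⋂ q : {q : τ × τ // q.1 ≠ q.2}, diff q ⁻¹' {0}ᶜ := by
    ext c
    simp [diff, Injective, sub_eq_zero, not_imp_not]
  rw [hset]
  refine dense_iInter_of_isOpen
    (fun q ↦ isOpen_compl_singleton.preimage (diff q).continuous_of_finiteDimensional)
    fun ⟨q, hq⟩ ↦ (dense_compl_singleton 0).preimage ?_
  refine (diff q).isOpenMap_of_finiteDimensional (LinearMap.surjective fun h ↦ ?_)
  classical
  simpa [diff, hq] using LinearMap.congr_fun h (Pi.single q.1 1)

lemma pairwise_disjoint_image_of_eqOn_const {X Y τ : Type*} {D : τ → Set X} {f : τ → X → Y}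
    {c : τ → Y} (hc : Injective c) (hf : ∀ s, EqOn (f s) (const X (c s)) (D s)) :
    Pairwise (Disjoint on fun s ↦ f s '' D s) := by
  rintro s t hst
  refine disjoint_left.2 ?_
  rintro _ ⟨x, hx, rfl⟩ ⟨y, hy, hxy⟩
  exact hst (hc ((hf s hx).symm.trans (hxy.symm.trans (hf t hy))))

lemma exists_dist_le_eqOn_const {X τ : Type*} [TopologicalSpace X] [NormalSpace X]
    [CompactSpace X] {D : τ → Set X} (hfin : LocallyFinite D) (hclosed : ∀ s, IsClosed (D s))
    (hdisj : Pairwise (Disjoint on D)) (f : C(X, ℝ)) {c : τ → ℝ} {δ : ℝ} (hδ : 0 ≤ δ)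
    (hc : ∀ s, ∀ x ∈ D s, |c s - f x| ≤ δ) :
    ∃ g : C(X, ℝ), dist g f ≤ δ ∧ ∀ s, EqOn g (const X (c s)) (D s) := by
  obtain ⟨h, hδ', hh⟩ := exists_continuousMap_eqOn_of_pairwise_disjoint hfin hclosed hdisj
    (f := fun s x ↦ c s - f x) (fun s ↦ by fun_prop) (J := Icc (-δ) δ)
    (nonempty_Icc.2 (neg_le_self hδ)) (fun s x hx ↦ abs_le.1 (hc s x hx))
  refine ⟨f + h, ?_, fun s x hx ↦ ?_⟩
  · rw [dist_eq_norm, add_sub_cancel_left, ContinuousMap.norm_le _ hδ]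
    exact fun x ↦ abs_le.2 (hδ' x)
  · simp only [ContinuousMap.add_apply, hh s hx, add_sub_cancel, const_apply]

variable [PseudoMetricSpace K]

lemma exists_forall_dist_lt_imp_exists_norm_sub_lt [CompactSpace K] {E : Type*}
    [SeminormedAddCommGroup E] (f : C(K, E)) {η : ℝ} (hη : 0 < η) :
    ∃ ε > 0, ∀ A : Set K, (∀ x ∈ A, ∀ y ∈ A, dist x y < ε) →
      ∃ a : E, ‖a‖ ≤ ‖f‖ ∧ ∀ x ∈ A, ‖f x - a‖ < η := by
  obtain ⟨ε, hε, hf⟩ := Metric.uniformContinuous_iff.1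
    (CompactSpace.uniformContinuous_of_continuous f.continuous) η hη
  refine ⟨ε, hε, fun A hA ↦ ?_⟩
  rcases A.eq_empty_or_nonempty with rfl | ⟨z, hz⟩
  · exact ⟨0, by simp⟩
  · exact ⟨f z, f.norm_coe_le_norm z, fun x hx ↦ dist_eq_norm (f x) (f z) ▸ hf (hA x hx z hz)⟩

/-- The maps `Φ j` are in general position at scale `ε`: there is a finite Ostrand family of that
scale for which all the images `Φ j '' B j s`, over both indices, are pairwise disjoint. -/
def SeparatesAtScale {Y : Type*} [TopologicalSpace Y] (k : ℕ) (ε : ℝ) (Φ : ι → C(K, Y)) : Prop :=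
  ∃ (σ : Type) (_ : Finite σ) (B : ι → σ → Set K), IsOstrandFamily k ε B ∧
    Pairwise (Disjoint on fun q : ι × σ ↦ Φ q.1 '' B q.1 q.2)

lemma SeparatesAtScale.mono {Y : Type*} [TopologicalSpace Y] {k : ℕ} {ε ε' : ℝ}
    {Φ : ι → C(K, Y)} (hΦ : SeparatesAtScale k ε Φ) (hε : ε ≤ ε') : SeparatesAtScale k ε' Φ := by
  obtain ⟨σ, hσ, B, hB, hdisj⟩ := hΦ
  exact ⟨σ, hσ, B, hB.mono hε, hdisj⟩

lemma SeparatesAtScale.comp_injective {Y Z : Type*} [TopologicalSpace Y] [TopologicalSpace Z]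
    {k : ℕ} {ε : ℝ} {Φ : ι → C(K, Y)} (hΦ : SeparatesAtScale k ε Φ) {g : C(Y, Z)}
    (hg : Injective g) : SeparatesAtScale k ε fun j ↦ g.comp (Φ j) := by
  obtain ⟨σ, hσ, B, hB, hdisj⟩ := hΦ
  refine ⟨σ, hσ, B, hB, fun q q' hq ↦ ?_⟩
  simpa only [onFun, ContinuousMap.coe_comp, image_comp] using
    (disjoint_image_iff hg).2 (hdisj hq)

variable [CompactSpace K] [Finite ι]

lemma isOpen_setOfPred_separatesAtScale {Y : Type*} [TopologicalSpace Y] [T2Space Y] (k : ℕ)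
    (ε : ℝ) : IsOpen {Φ : ι → C(K, Y) | SeparatesAtScale k ε Φ} := by
  refine isOpen_iff_mem_nhds.2 fun Φ ⟨σ, hσ, B, hB, hdisj⟩ ↦ ?_
  have hopen (q q' : ι × σ) :
      IsOpen {Ψ : ι → C(K, Y) | Disjoint (Ψ q.1 '' B q.1 q.2) (Ψ q'.1 '' B q'.1 q'.2)} :=
    (isOpen_setOfPred_disjoint_image (hB.isClosed q.1 q.2).isCompact
      (hB.isClosed q'.1 q'.2).isCompact).preimage
      (f := fun Ψ : ι → C(K, Y) ↦ (Ψ q.1, Ψ q'.1)) (by fun_prop)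
  have hnear : ∀ᶠ Ψ in nhds Φ, ∀ q q' : ι × σ, q ≠ q' →
      Disjoint (Ψ q.1 '' B q.1 q.2) (Ψ q'.1 '' B q'.1 q'.2) := by
    simp only [Filter.eventually_all]
    exact fun q q' hq ↦ (hopen q q').mem_nhds (hdisj hq)
  exact hnear.mono fun Ψ hΨ ↦ ⟨σ, hσ, B, hB, fun q q' hq ↦ hΨ q q' hq⟩

lemma CovDimLE.dense_setOfPred_separatesAtScale {n : ℕ} (hK : CovDimLE K n) {ε : ℝ} (hε : 0 < ε) :
    Dense {Φ : ι → C(K, ℝ) | SeparatesAtScale (n + 1) ε Φ} := by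
  have := Fintype.ofFinite ι
  refine Metric.dense_iff.2 fun Φ r hr ↦ ?_
  obtain ⟨δ, hδ, hosc⟩ :=
    exists_forall_dist_lt_imp_exists_norm_sub_lt (ContinuousMap.pi Φ) (by positivity : 0 < r / 4)
  obtain ⟨σ, hσ, B, hB⟩ := hK.exists_isOstrandFamily ι (lt_min hε hδ)
  have := Fintype.ofFinite σ
  choose a _ ha using fun q : ι × σ ↦ hosc _ ((hB.mono (min_le_right _ _)).dist_lt q.1 q.2)
  obtain ⟨c, hc, hac⟩ := (dense_setOfPred_injective (ι × σ)).exists_dist_lt (fun q ↦ a q q.1)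
    (by positivity : 0 < r / 4)
  have hcΦ (j : ι) (s : σ) (x : K) (hx : x ∈ B j s) : |c (j, s) - Φ j x| ≤ r / 2 := calc
    |c (j, s) - Φ j x| ≤ |c (j, s) - a (j, s) j| + |a (j, s) j - Φ j x| := abs_sub_le _ _ _
    _ ≤ r / 4 + r / 4 := by
      gcongr
      · exact ((dist_comm _ _).trans_le (dist_le_pi_dist (fun q ↦ a q q.1) c (j, s))).trans hac.le
      · rw [abs_sub_comm]
        exact (norm_le_pi_norm (ContinuousMap.pi Φ x - a (j, s)) j).trans (ha (j, s) x hx).le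
    _ = r / 2 := by ring
  -- `Ψ j` is within `r / 2` of `Φ j` and has the constant value `c (j, s)` on `B j s`.
  choose Ψ hΨΦ hΨ using fun j ↦ exists_dist_le_eqOn_const (locallyFinite_of_finite (B j))
    (hB.isClosed j) (hB.disjoint j) (Φ j) (half_pos hr).le (hcΦ j)
  refine ⟨Ψ, ?_, σ, hσ, B, hB.mono (min_le_left _ _), ?_⟩
  · exact ((dist_pi_le_iff (half_pos hr).le).2 hΨΦ).trans_lt (half_lt_self hr)
  · exact pairwise_disjoint_image_of_eqOn_const hc fun q ↦ hΨ q.1 q.2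

lemma CovDimLE.exists_forall_separatesAtScale {n : ℕ} (hK : CovDimLE K n) (ι : Type*) [Finite ι] :
    ∃ Φ : ι → C(K, ℝ), ∀ ε > 0, SeparatesAtScale (n + 1) ε Φ := by
  have := Fintype.ofFinite ι
  obtain ⟨Φ, hΦ⟩ := (dense_iInter_of_isOpen
    (fun N : ℕ ↦ isOpen_setOfPred_separatesAtScale (K := K) (ι := ι) (n + 1) (1 / (N + 1 : ℝ)))
    fun N ↦ hK.dense_setOfPred_separatesAtScale Nat.one_div_pos_of_nat).nonempty
  refine ⟨Φ, fun ε hε ↦ ?_⟩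
  obtain ⟨N, hN⟩ := exists_nat_one_div_lt hε
  exact SeparatesAtScale.mono (mem_iInter.1 hΦ N) hN.le

end GeneralPosition

section Average

variable {ι K X : Type*} [Fintype ι]

lemma norm_average_le {E : Type*} [SeminormedAddCommGroup E] [NormedSpace ℝ E] {u : ι → E}
    {a b : ℝ} (ha : 0 ≤ a) (hb : 0 ≤ b) {S : Set ι} {k : ℕ} (hS : S.encard ≤ k)
    (hu : ∀ j, ‖u j‖ ≤ a + b) (huS : ∀ j ∉ S, ‖u j‖ ≤ a) :
    ‖(Fintype.card ι : ℝ)⁻¹ • ∑ j, u j‖ ≤ a + k / Fintype.card ι * b := by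
  classical
  rcases isEmpty_or_nonempty ι with hι | hι
  · simpa using ha
  have hcard : (0 : ℝ) < Fintype.card ι := mod_cast Fintype.card_pos
  have hSk : ((S.toFinset.card : ℕ) : ℝ) ≤ k := by
    rw [← coe_toFinset S, encard_coe_eq_coe_finsetCard] at hS
    exact_mod_cast hS
  have hterm (j : ι) : ‖u j‖ ≤ a + if j ∈ S.toFinset then b else 0 := by
    split_ifs with hj
    · exact hu j
    · simpa only [add_zero] using huS j (mt mem_toFinset.2 hj)
  rw [norm_smul, norm_inv, Real.norm_natCast, inv_mul_le_iff₀ hcard]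
  calc
    ‖∑ j, u j‖ ≤ ∑ j, (a + if j ∈ S.toFinset then b else 0) :=
      norm_sum_le_of_le _ fun j _ ↦ hterm j
    _ = Fintype.card ι * a + S.toFinset.card * b := by
      simp only [Finset.sum_add_distrib, Finset.sum_ite_mem, Finset.univ_inter, Finset.sum_const,
        Finset.card_univ, nsmul_eq_mul]
    _ ≤ Fintype.card ι * a + k * b := by gcongr
    _ = Fintype.card ι * (a + k / Fintype.card ι * b) := by field_simp

variable [TopologicalSpace K] [TopologicalSpace X]

/-- The operator `g ↦ |ι|⁻¹ ∑ j, g ∘ θ j` averaging the composition operators of the maps `θ j`. -/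
def averageComp (θ : ι → C(K, X)) : C(X, ℝ) →ₗ[ℝ] C(K, ℝ) :=
  (Fintype.card ι : ℝ)⁻¹ • ∑ j, (ContinuousMap.compRightAlgHom ℝ ℝ (θ j)).toLinearMap

lemma averageComp_apply (θ : ι → C(K, X)) (g : C(X, ℝ)) (x : K) :
    averageComp θ g x = (Fintype.card ι : ℝ)⁻¹ • ∑ j, g (θ j x) := by
  simp [averageComp]

lemma continuous_ptTop_averageComp (θ : ι → C(K, X)) :
    @Continuous _ _ (ptTop X) (ptTop K) (averageComp θ) := by
  let _ := ptTop X
  refine continuous_induced_rng.2 (continuous_pi fun x ↦ ?_)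
  have heval (y : X) : Continuous fun g : C(X, ℝ) ↦ g y :=
    (continuous_apply y).comp continuous_induced_dom
  simp only [comp_apply, averageComp_apply, smul_eq_mul]
  exact continuous_const.mul (continuous_finsetSum _ fun j _ ↦ heval (θ j x))

lemma norm_averageComp_le [CompactSpace K] [CompactSpace X] (θ : ι → C(K, X)) (g : C(X, ℝ)) :
    ‖averageComp θ g‖ ≤ ‖g‖ := by
  refine (ContinuousMap.norm_le _ (norm_nonneg g)).2 fun x ↦ ?_
  have hg (j : ι) : ‖g (θ j x)‖ ≤ ‖g‖ := g.norm_coe_le_norm (θ j x)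
  simpa only [averageComp_apply, mul_zero, add_zero] using
    norm_average_le (S := ∅) (k := 0) (norm_nonneg g) le_rfl encard_empty.le
      (fun j ↦ (hg j).trans (add_zero _).ge) fun j _ ↦ hg j

end Average

lemma exists_preimage_norm_le_of_approx {E F 𝓕 : Type*} [SeminormedAddCommGroup E]
    [CompleteSpace E] [NormedAddCommGroup F] [FunLike 𝓕 E F] [AddMonoidHomClass 𝓕 E F] {L : 𝓕}
    (hL : Continuous L) {C q : ℝ} (hC : 0 ≤ C) (hq₀ : 0 ≤ q) (hq : q < 1)
    (happrox : ∀ f, ∃ g, ‖g‖ ≤ C * ‖f‖ ∧ ‖f - L g‖ ≤ q * ‖f‖) (f : F) :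
    ∃ g, L g = f ∧ ‖g‖ ≤ C * (1 - q)⁻¹ * ‖f‖ := by
  choose s hsC hsq using happrox
  let r : ℕ → F := fun k ↦ (fun v ↦ v - L (s v))^[k] f
  have hr_succ (k : ℕ) : r (k + 1) = r k - L (s (r k)) := iterate_succ_apply' _ _ _
  have hr_norm (k : ℕ) : ‖r k‖ ≤ q ^ k * ‖f‖ := by
    induction k with
    | zero => simp only [r, iterate_zero_apply, pow_zero, one_mul, le_refl]
    | succ k ih => calc
        ‖r (k + 1)‖ ≤ q * ‖r k‖ := hr_succ k ▸ hsq (r k)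
        _ ≤ q * (q ^ k * ‖f‖) := by gcongr
        _ = q ^ (k + 1) * ‖f‖ := by ring
  have hgeom : HasSum (fun k ↦ q ^ k * ‖f‖) ((1 - q)⁻¹ * ‖f‖) :=
    (hasSum_geometric_of_lt_one hq₀ hq).mul_right _
  have hs_norm (k : ℕ) : ‖s (r k)‖ ≤ C * (q ^ k * ‖f‖) :=
    (hsC _).trans (mul_le_mul_of_nonneg_left (hr_norm k) hC)
  have hsum : Summable fun k ↦ s (r k) := .of_norm_bounded (hgeom.mul_left C).summable hs_norm
  refine ⟨∑' k, s (r k), ?_, mul_assoc C _ _ ▸ tsum_of_norm_bounded (hgeom.mul_left C) hs_norm⟩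
  have hpartial (N : ℕ) : ∑ k ∈ Finset.range N, L (s (r k)) = f - r N := calc
    _ = ∑ k ∈ Finset.range N, (r k - r (k + 1)) :=
      Finset.sum_congr rfl fun k _ ↦ by rw [hr_succ, sub_sub_cancel]
    _ = f - r N := Finset.sum_range_sub' r N
  have hr_lim : Filter.Tendsto r Filter.atTop (nhds 0) :=
    squeeze_zero_norm hr_norm hgeom.summable.tendsto_atTop_zero
  have hlim := (hsum.hasSum.map L hL).tendsto_sum_nat
  simp only [comp_apply, hpartial] at hlim
  simpa only [sub_zero] using tendsto_nhds_unique hlim (hr_lim.const_sub f)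

section CGood

variable {ι K X : Type*} [Fintype ι] [Nonempty ι] [PseudoMetricSpace K] [CompactSpace K]
  [TopologicalSpace X] [CompactSpace X] [T2Space X] {θ : ι → C(K, X)} {k : ℕ}

lemma exists_norm_le_norm_sub_averageComp_le {q : ℝ} (hq : 2 * k / Fintype.card ι < q)
    (hθ : ∀ ε > 0, SeparatesAtScale k ε θ) (f : C(K, ℝ)) :
    ∃ g, ‖g‖ ≤ ‖f‖ ∧ ‖f - averageComp θ g‖ ≤ q * ‖f‖ := by
  rcases (norm_nonneg f).eq_or_lt' with hf | hf
  · exact ⟨0, by simp [hf]⟩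
  have hq₀ : 0 ≤ q := le_trans (by positivity) hq.le
  obtain ⟨η, hη, hηq⟩ : ∃ η > 0, η + 2 * k / Fintype.card ι = q :=
    ⟨q - 2 * k / Fintype.card ι, sub_pos.2 hq, sub_add_cancel _ _⟩
  obtain ⟨ε, hε, hosc⟩ := exists_forall_dist_lt_imp_exists_norm_sub_lt f (mul_pos hη hf)
  obtain ⟨σ, _, B, hB, hdisj⟩ := hθ ε hε
  choose a haf ha using fun p : ι × σ ↦ hosc _ (hB.dist_lt p.1 p.2)
  obtain ⟨g, hgf, hg⟩ := exists_continuousMap_eqOn_of_pairwise_disjoint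
    (locallyFinite_of_finite _)
    (fun p ↦ ((hB.isClosed p.1 p.2).isCompact.image (θ p.1).continuous).isClosed) hdisj
    (f := fun p _ ↦ a p) (fun _ ↦ continuousOn_const) (J := Icc (-‖f‖) ‖f‖)
    (nonempty_Icc.2 (neg_le_self hf.le)) (fun p _ _ ↦ abs_le.1 (haf p))
  have hg_norm (y : X) : ‖g y‖ ≤ ‖f‖ := abs_le.2 (hgf y)
  refine ⟨g, (ContinuousMap.norm_le _ hf.le).2 hg_norm,
    (ContinuousMap.norm_le _ (mul_nonneg hq₀ hf.le)).2 fun x ↦ ?_⟩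
  have hterm (j : ι) : ‖f x - g (θ j x)‖ ≤ η * ‖f‖ + 2 * ‖f‖ := by
    linarith [norm_sub_le (f x) (g (θ j x)), f.norm_coe_le_norm x, hg_norm (θ j x), mul_pos hη hf]
  have hterm_covered : ∀ j ∉ {j | ∀ s, x ∉ B j s}, ‖f x - g (θ j x)‖ ≤ η * ‖f‖ := by
    intro j hj
    obtain ⟨s, hs⟩ : ∃ s, x ∈ B j s := by simpa using hj
    rw [hg (j, s) (mem_image_of_mem _ hs)]
    exact (ha (j, s) x hs).le
  calc
    ‖(f - averageComp θ g) x‖ = ‖(Fintype.card ι : ℝ)⁻¹ • ∑ j, (f x - g (θ j x))‖ := by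
      rw [ContinuousMap.sub_apply, averageComp_apply, Finset.sum_sub_distrib, smul_sub,
        Finset.sum_const, Finset.card_univ, ← Nat.cast_smul_eq_nsmul ℝ,
        inv_smul_smul₀ (Nat.cast_ne_zero.2 Fintype.card_ne_zero)]
    _ ≤ η * ‖f‖ + k / Fintype.card ι * (2 * ‖f‖) :=
      norm_average_le (by positivity) (by positivity) (hB.encard_missed_le x) hterm hterm_covered
    _ = q * ‖f‖ := by rw [← hηq]; ring

lemma isCGoodMap_averageComp {c : ℝ} (hc : 0 < c) (hk : 2 * k / Fintype.card ι < 1 - c⁻¹)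
    (hθ : ∀ ε > 0, SeparatesAtScale k ε θ) : IsCGoodMap c (averageComp θ) := by
  refine ⟨continuous_ptTop_averageComp θ, norm_averageComp_le θ, fun f ↦ ?_⟩
  have hcont : Continuous (averageComp θ) :=
    AddMonoidHomClass.continuous_of_bound (averageComp θ) 1 fun g ↦
      (norm_averageComp_le θ g).trans (one_mul _).ge
  obtain ⟨g, hgf, hg⟩ := exists_preimage_norm_le_of_approx hcont zero_le_one
    (le_trans (by positivity) hk.le) (sub_lt_self _ (inv_pos.2 hc))
    (fun f ↦ by simpa only [one_mul] using exists_norm_le_norm_sub_averageComp_le hk hθ f) f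
  exact ⟨g, hgf, by simpa only [one_mul, sub_sub_cancel, inv_inv] using hg⟩

end CGood

/-- for each `c > 1` and each nonempty compact metrizable finite
dimensional `K` there is a c-good map of `C_p(I)` onto `C_p(K)`. -/
theorem exists_cGood_unitInterval_to_finDim (c : ℝ) (hc : 1 < c)
    (K : Type*) [TopologicalSpace K] [CompactSpace K]
    [TopologicalSpace.MetrizableSpace K] [Nonempty K] (hfd : FinDimSpace K) :
    ∃ L : C(unitInterval, ℝ) →ₗ[ℝ] C(K, ℝ), IsCGoodMap c L ∧ Surjective L := by
  let _ : MetricSpace K := TopologicalSpace.metrizableSpaceMetric K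
  obtain ⟨n, hn⟩ := hfd
  have hc₀ : 0 < 1 - c⁻¹ := sub_pos.2 (inv_lt_one_of_one_lt₀ hc)
  obtain ⟨m, hm⟩ := exists_nat_gt (2 * (n + 1 : ℕ) / (1 - c⁻¹))
  have hm₀ : (0 : ℝ) < m := lt_of_le_of_lt (by positivity) hm
  have : NeZero m := ⟨by rintro rfl; exact hm₀.ne' Nat.cast_zero⟩
  obtain ⟨Φ, hΦ⟩ := hn.exists_forall_separatesAtScale (Fin m)
  let sigmoid : C(ℝ, unitInterval) := ⟨unitInterval.sigmoid, by fun_prop⟩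
  have hL := isCGoodMap_averageComp (zero_lt_one.trans hc)
    (by rwa [Fintype.card_fin, div_lt_comm₀ hm₀ hc₀])
    (fun ε hε ↦ (hΦ ε hε).comp_injective (g := sigmoid) unitInterval.sigmoid_injective)
  exact ⟨_, hL, fun f ↦ (hL.2.2 f).imp fun _ hg ↦ hg.1⟩

end
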